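/- For all integers q ≥ 1 and s ≥ 1 there is a constant C = C(q, s) > 0 with the following property: for every nonzero polynomial map p : ℝ^q → ℝ^q of degree at most s and every α > 0, the Lebesgue measure of the set {x ∈ [−1/2, 1/2]^q : ‖p(x)‖ ≤ α} is at most C · α^{1/s} / ht(p)^{1/s}. -/

import Mathlib

open MeasureTheory

/-- The (naive) height of a polynomial map `p : ℝ^q → ℝ^q`, given by a family of
multivariate polynomials: the maximum absolute value of the coefficients. -/
noncomputable def polyHeight {q : ℕ} (P : Fin q → MvPolynomial (Fin q) ℝ) : NNReal :=
  Finset.univ.sup fun i => (P i).support.sup fun d => ‖(P i).coeff d‖₊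

/-!
A real polynomial `g` of degree at most `s` satisfying `|g t| < δ ^ s * |g 0|` must have a
complex root `z` with `|t - z| < δ * |z|`, since otherwise the product over the roots would make
`|g t|` too large. For `|t| ≤ 1` and small `δ` such a `z` is bounded, so `t` lies in one of at
most `s` intervals of length `4 * δ`. Integrating this over all lines through a point `x` of a
convex body bounds the measure of the set where a polynomial `f` in several variables satisfies
`|f| < δ ^ s * |f x|`. Finally, `x` is taken to maximise `|f|` on the body: on polynomials of
degree at most `s` this maximum is a norm, hence dominates the largest coefficient up to a
constant.
-/

section Roots

open Polynomial

theorem exists_mem_roots_norm_sub_lt_of_norm_eval_lt {𝕜 : Type*} [NormedField 𝕜] {g : 𝕜[X]}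
    (hg : g.Splits) {a b : 𝕜} {δ : ℝ} (hδ : 0 ≤ δ)
    (h : ‖g.eval b‖ < δ ^ g.natDegree * ‖g.eval a‖) :
    ∃ z ∈ g.roots, ‖b - z‖ < δ * ‖a - z‖ := by
  by_contra! hfar
  have norm_eval (x : 𝕜) :
      ‖g.eval x‖ = ‖g.leadingCoeff‖ * (g.roots.map fun z ↦ ‖x - z‖).prod := by
    rw [hg.eval_eq_prod_roots, norm_mul, ← normHom_apply (g.roots.map _).prod, map_multiset_prod,
      Multiset.map_map]
    rfl
  refine h.not_ge ?_
  calc δ ^ g.natDegree * ‖g.eval a‖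
      = ‖g.leadingCoeff‖ * (g.roots.map fun z ↦ δ * ‖a - z‖).prod := by
        rw [norm_eval, Multiset.prod_map_mul, Multiset.map_const', Multiset.prod_replicate,
          ← hg.natDegree_eq_card_roots]
        ring
    _ ≤ ‖g.leadingCoeff‖ * (g.roots.map fun z ↦ ‖b - z‖).prod := by
        gcongr
        exact Multiset.prod_map_le_prod_map₀ _ _ (fun _ _ ↦ by positivity) hfar
    _ = ‖g.eval b‖ := (norm_eval b).symm

theorem exists_mem_aroots_abs_sub_re_lt {g : ℝ[X]} {t δ : ℝ} (ht : |t| ≤ 1) (hδ : 0 ≤ δ)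
    (hδ' : δ ≤ 1 / 2) (h : |g.eval t| < δ ^ g.natDegree * |g.eval 0|) :
    ∃ z ∈ g.aroots ℂ, |t - z.re| < 2 * δ := by
  have norm_eval (x : ℝ) : ‖(g.map (algebraMap ℝ ℂ)).eval (x : ℂ)‖ = |g.eval x| := by
    rw [eval_map_algebraMap, ← Complex.coe_algebraMap, aeval_algebraMap_apply, coe_aeval_eq_eval,
      norm_algebraMap', Real.norm_eq_abs]
  rw [← norm_eval, ← norm_eval, ← natDegree_map (algebraMap ℝ ℂ)] at h
  obtain ⟨z, hz, hlt⟩ :=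
    exists_mem_roots_norm_sub_lt_of_norm_eval_lt (IsAlgClosed.splits _) hδ h
  refine ⟨z, hz, ?_⟩
  rw [Complex.ofReal_zero, zero_sub, norm_neg] at hlt
  have norm_t : ‖(t : ℂ)‖ ≤ 1 := by rwa [Complex.norm_real]
  have norm_z : ‖z‖ ≤ 2 := by linarith [norm_le_norm_add_norm_sub (t : ℂ) z,
    mul_le_mul_of_nonneg_right hδ' (norm_nonneg z)]
  calc |t - z.re| ≤ ‖(t : ℂ) - z‖ := by simpa using Complex.abs_re_le_norm ((t : ℂ) - z)
    _ < δ * ‖z‖ := hlt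
    _ ≤ 2 * δ := by rw [mul_comm]; gcongr

theorem volume_abs_eval_lt_le {s : ℕ} (hs : s ≠ 0) {g : ℝ[X]} (hg : g.natDegree ≤ s) {δ : ℝ}
    (hδ : 0 ≤ δ) :
    volume {t ∈ Set.Icc (-1 : ℝ) 1 | |g.eval t| < δ ^ s * |g.eval 0|} ≤
      ENNReal.ofReal (4 * s * δ) := by
  rcases le_total (1 / 2) δ with hδ' | hδ'
  · have : (1 : ℝ) ≤ s := by exact_mod_cast Nat.one_le_iff_ne_zero.mpr hs
    calc _ ≤ volume (Set.Icc (-1 : ℝ) 1) := measure_mono (Set.sep_subset _ _)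
      _ = ENNReal.ofReal (1 - -1) := Real.volume_Icc
      _ ≤ ENNReal.ofReal (4 * s * δ) := ENNReal.ofReal_le_ofReal (by nlinarith)
  have cover : {t ∈ Set.Icc (-1 : ℝ) 1 | |g.eval t| < δ ^ s * |g.eval 0|} ⊆
      ⋃ z ∈ (g.aroots ℂ).toFinset, Metric.ball z.re (2 * δ) := by
    rintro t ⟨ht, hlt⟩
    have pow_le : δ ^ s ≤ δ ^ g.natDegree := pow_le_pow_of_le_one hδ (by linarith) hg
    obtain ⟨z, hz, hdist⟩ := exists_mem_aroots_abs_sub_re_lt (abs_le.mpr ht) hδ hδ'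
      (hlt.trans_le (by gcongr))
    exact Set.mem_biUnion (Multiset.mem_toFinset.mpr hz) hdist
  have card_le : (g.aroots ℂ).toFinset.card ≤ s :=
    (Multiset.toFinset_card_le _).trans <| (card_roots' _).trans <| natDegree_map_le.trans hg
  calc _ ≤ ∑ z ∈ (g.aroots ℂ).toFinset, volume (Metric.ball z.re (2 * δ)) :=
        (measure_mono cover).trans (measure_biUnion_finset_le _ _)
    _ = (g.aroots ℂ).toFinset.card * ENNReal.ofReal (2 * (2 * δ)) := by
        simp only [Real.volume_ball, Finset.sum_const, nsmul_eq_mul]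
    _ ≤ s * ENNReal.ofReal (2 * (2 * δ)) := by gcongr
    _ = ENNReal.ofReal (4 * s * δ) := by
        rw [← ENNReal.ofReal_natCast, ← ENNReal.ofReal_mul s.cast_nonneg]
        ring_nf

end Roots

section StarConvex

section Module

variable {E : Type*} [AddCommGroup E] [Module ℝ E]

/-- The region of polar coordinates `(t, v)` with `1 / 2 ≤ t ≤ 1` that `(t, v) ↦ x + t • v` sends
into `A`. Slicing it in the two directions compares the measure of `A` with the lengths of its
sections by rays from `x`. -/
def raySet (x : E) (A : Set E) : Set (ℝ × E) :=
  {p | p.1 ∈ Set.Icc (1 / 2 : ℝ) 1 ∧ x + p.1 • p.2 ∈ A}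

theorem add_half_smul_mem_of_mem_raySet {x v : E} {K : Set E} (hK : StarConvex ℝ x K) {t : ℝ}
    (h : (t, v) ∈ raySet x K) : x + (1 / 2 : ℝ) • v ∈ K := by
  obtain ⟨⟨half_le, -⟩, hmem⟩ := h
  have t_pos : 0 < t := by linarith
  have := hK.add_smul_mem hmem (t := 1 / 2 / t) (by positivity) ((div_le_one t_pos).mpr half_le)
  rwa [smul_smul, div_mul_cancel₀ _ t_pos.ne'] at this

end Module

variable {E : Type*} [NormedAddCommGroup E] [NormedSpace ℝ E] [FiniteDimensional ℝ E]
  [MeasurableSpace E] [BorelSpace E] (μ : Measure E) [μ.IsAddHaarMeasure]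

open Module

theorem addHaar_preimage_add_smul (x : E) {t : ℝ} (ht : t ≠ 0) (A : Set E) :
    μ ((fun v ↦ x + t • v) ⁻¹' A) = ENNReal.ofReal |(t ^ finrank ℝ E)⁻¹| * μ A := by
  rw [← measure_preimage_add μ x A, ← Measure.addHaar_preimage_smul μ ht]
  rfl

theorem le_addHaar_preimage_add_smul (x : E) {t : ℝ} (ht₀ : 0 < t) (ht₁ : t ≤ 1) (A : Set E) :
    μ A ≤ μ ((fun v ↦ x + t • v) ⁻¹' A) := by
  rw [addHaar_preimage_add_smul μ x ht₀.ne']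
  refine le_mul_of_one_le_left' ?_
  rw [ENNReal.one_le_ofReal, abs_of_pos (by positivity)]
  exact (one_le_inv₀ (by positivity)).mpr (pow_le_one₀ ht₀.le ht₁)

theorem measurableSet_raySet (x : E) {A : Set E} (hA : MeasurableSet A) :
    MeasurableSet (raySet x A) :=
  (measurable_fst measurableSet_Icc).inter
    ((by fun_prop : Continuous fun p : ℝ × E ↦ x + p.1 • p.2).measurable hA)

theorem half_measure_le_prod_raySet (x : E) {A : Set E} (hA : MeasurableSet A) :
    2⁻¹ * μ A ≤ volume.prod μ (raySet x A) := by
  calc 2⁻¹ * μ A = ∫⁻ _ in Set.Icc (1 / 2 : ℝ) 1, μ A := by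
        rw [setLIntegral_const, Real.volume_Icc, mul_comm, sub_half, one_div,
          ENNReal.ofReal_inv_of_pos two_pos, ENNReal.ofReal_ofNat]
    _ ≤ ∫⁻ t in Set.Icc (1 / 2 : ℝ) 1, μ (Prod.mk t ⁻¹' raySet x A) := by
        refine setLIntegral_mono' measurableSet_Icc fun t ht ↦ ?_
        calc μ A ≤ μ ((fun v ↦ x + t • v) ⁻¹' A) :=
              le_addHaar_preimage_add_smul μ x (by linarith [ht.1]) ht.2 A
          _ = μ (Prod.mk t ⁻¹' raySet x A) :=
              congrArg μ (Set.ext fun _ ↦ (and_iff_right ht).symm)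
    _ ≤ ∫⁻ t, μ (Prod.mk t ⁻¹' raySet x A) := setLIntegral_le_lintegral _ _
    _ = volume.prod μ (raySet x A) := (Measure.prod_apply (measurableSet_raySet x hA)).symm

theorem prod_raySet_le {x : E} {K A : Set E} (hK : StarConvex ℝ x K) (hAK : A ⊆ K)
    (hA : MeasurableSet A) {c : ENNReal} (hc : ∀ v, volume ((·, v) ⁻¹' raySet x A) ≤ c) :
    volume.prod μ (raySet x A) ≤ 2 ^ finrank ℝ E * c * μ K := by
  let D : Set E := (fun v ↦ x + (1 / 2 : ℝ) • v) ⁻¹' K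
  have section_le (v : E) : volume ((·, v) ⁻¹' raySet x A) ≤ D.indicator (fun _ ↦ c) v := by
    by_cases hv : v ∈ D
    · rw [Set.indicator_of_mem hv]
      exact hc v
    · have : (·, v) ⁻¹' raySet x A = ∅ := Set.eq_empty_of_forall_notMem fun t ht ↦
        hv (add_half_smul_mem_of_mem_raySet hK ⟨ht.1, hAK ht.2⟩)
      rw [this, measure_empty]
      exact zero_le
  calc volume.prod μ (raySet x A) = ∫⁻ v, volume ((·, v) ⁻¹' raySet x A) ∂μ :=
        Measure.prod_apply_symm (measurableSet_raySet x hA)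
    _ ≤ ∫⁻ v, D.indicator (fun _ ↦ c) v ∂μ := lintegral_mono section_le
    _ ≤ c * μ D := lintegral_indicator_const_le _ _
    _ = 2 ^ finrank ℝ E * c * μ K := by
        rw [addHaar_preimage_add_smul μ x one_half_pos.ne', one_div, inv_pow, inv_inv,
          abs_of_nonneg (by positivity), ENNReal.ofReal_pow zero_le_two, ENNReal.ofReal_ofNat]
        ring

theorem measure_le_of_forall_volume_section_raySet_le {x : E} {K A : Set E}
    (hK : StarConvex ℝ x K) (hAK : A ⊆ K) (hA : MeasurableSet A) {c : ENNReal}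
    (hc : ∀ v, volume ((·, v) ⁻¹' raySet x A) ≤ c) :
    μ A ≤ 2 ^ (finrank ℝ E + 1) * c * μ K := by
  calc μ A = 2 * (2⁻¹ * μ A) := by
        rw [← mul_assoc, ENNReal.mul_inv_cancel two_ne_zero ENNReal.ofNat_ne_top, one_mul]
    _ ≤ 2 * (2 ^ finrank ℝ E * c * μ K) := mul_le_mul_right
        ((half_measure_le_prod_raySet μ x hA).trans (prod_raySet_le μ hK hAK hA hc)) 2
    _ = 2 ^ (finrank ℝ E + 1) * c * μ K := by ring

open Polynomial in
theorem measure_abs_lt_le_of_polynomial_on_lines {x : E} {K : Set E} (hK : StarConvex ℝ x K)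
    (hKm : MeasurableSet K) {f : E → ℝ} (hfm : Measurable f) {s : ℕ} (hs : s ≠ 0)
    (hf : ∀ v, ∃ g : ℝ[X], g.natDegree ≤ s ∧ ∀ t, g.eval t = f (x + t • v)) {δ : ℝ}
    (hδ : 0 ≤ δ) :
    μ {y ∈ K | |f y| < δ ^ s * |f x|} ≤
      2 ^ (finrank ℝ E + 1) * ENNReal.ofReal (4 * s * δ) * μ K := by
  refine measure_le_of_forall_volume_section_raySet_le μ hK (Set.sep_subset _ _)
    (hKm.inter (measurableSet_lt hfm.abs measurable_const)) fun v ↦ ?_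
  obtain ⟨g, hg, g_eval⟩ := hf v
  have f_x : f x = g.eval 0 := by rw [g_eval, zero_smul, add_zero]
  refine (measure_mono ?_).trans (volume_abs_eval_lt_le hs hg hδ)
  rintro t ⟨ht, -, hlt⟩
  exact ⟨⟨by linarith [ht.1], ht.2⟩, by rwa [g_eval t, ← f_x]⟩

end StarConvex

open Polynomial in
theorem exists_natDegree_le_eval_add_smul {R σ : Type*} [CommSemiring R] (f : MvPolynomial σ R)
    (x v : σ → R) :
    ∃ g : R[X], g.natDegree ≤ f.totalDegree ∧ ∀ t, g.eval t = f.eval (x + t • v) := by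
  refine ⟨MvPolynomial.aeval (fun i ↦ C (v i) * X + C (x i)) f, ?_, fun t ↦ ?_⟩
  · simpa only [mul_one] using
      MvPolynomial.aeval_natDegree_le f le_rfl _ fun i ↦ natDegree_linear_le
  · have eval_line : (fun i ↦ aeval t (C (v i) * X + C (x i))) = x + t • v := by
      ext i
      simp only [coe_aeval_eq_eval, eval_add, eval_mul, eval_C, eval_X, Pi.add_apply,
        Pi.smul_apply, smul_eq_mul]
      ring
    rw [← coe_aeval_eq_eval, MvPolynomial.comp_aeval_apply, eval_line, MvPolynomial.aeval_eq_eval]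

theorem exists_forall_norm_le_mul_norm_of_injective {𝕜 V F G : Type*} [NontriviallyNormedField 𝕜]
    [CompleteSpace 𝕜] [AddCommGroup V] [Module 𝕜 V] [FiniteDimensional 𝕜 V]
    [NormedAddCommGroup F] [NormedSpace 𝕜 F] [NormedAddCommGroup G] [NormedSpace 𝕜 G]
    (c : V →ₗ[𝕜] G) {L : V →ₗ[𝕜] F} (hL : Function.Injective L) :
    ∃ C > 0, ∀ v, ‖c v‖ ≤ C * ‖L v‖ := by
  let T := (c ∘ₗ (LinearEquiv.ofInjective L hL).symm.toLinearMap).toContinuousLinearMap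
  refine ⟨‖T‖ + 1, by positivity, fun v ↦ ?_⟩
  have T_apply : T (LinearEquiv.ofInjective L hL v) = c v := by simp [T]
  calc ‖c v‖ = ‖T (LinearEquiv.ofInjective L hL v)‖ := by rw [T_apply]
    _ ≤ ‖T‖ * ‖L v‖ := T.le_opNorm _
    _ ≤ (‖T‖ + 1) * ‖L v‖ := by gcongr; linarith

section MvPolynomial

open MvPolynomial

variable {σ : Type*}

/-- Restriction of a real polynomial to a set `B`, as a linear map to the continuous functions on
`B`; for compact `B` the target carries the supremum norm. -/
noncomputable def evalOn (B : Set (σ → ℝ)) : MvPolynomial σ ℝ →ₗ[ℝ] C(B, ℝ) where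
  toFun f := ⟨fun x ↦ eval x.1 f, (continuous_eval f).comp continuous_subtype_val⟩
  map_add' f g := by ext; simp
  map_smul' a f := by ext; simp

theorem evalOn_injective [Finite σ] {B : Set (σ → ℝ)} (hB : (interior B).Nonempty) :
    Function.Injective (evalOn B) := by
  have := Fintype.ofFinite σ
  obtain ⟨x, hx⟩ := hB
  obtain ⟨r, hr, ball_subset⟩ := Metric.mem_nhds_iff.mp (mem_interior_iff_mem_nhds.mp hx)
  rw [ball_pi x hr] at ball_subset
  refine fun f g hfg ↦ funext_set _
    (fun i ↦ infinite_of_mem_nhds (x i) (Metric.ball_mem_nhds (x i) hr)) fun y hy ↦ ?_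
  exact DFunLike.congr_fun hfg ⟨y, ball_subset hy⟩

theorem exists_abs_coeff_le_mul_abs_eval [Finite σ] (s : ℕ) {B : Set (σ → ℝ)} (hB : IsCompact B)
    (hBi : (interior B).Nonempty) :
    ∃ C > 0, ∀ f : MvPolynomial σ ℝ, f.totalDegree ≤ s →
      ∃ x ∈ B, ∀ d, |f.coeff d| ≤ C * |eval x f| := by
  have := isCompact_iff_compactSpace.mp hB
  have := (Finsupp.finite_of_degree_le (σ := σ) s).fintype
  let V := restrictTotalDegree σ ℝ s
  let coeffs : V →ₗ[ℝ] ({d : σ →₀ ℕ | d.degree ≤ s} → ℝ) :=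
    LinearMap.pi fun d ↦ lcoeff ℝ d.1 ∘ₗ V.subtype
  obtain ⟨C, hC, hcoeffs⟩ := exists_forall_norm_le_mul_norm_of_injective coeffs
    (L := evalOn B ∘ₗ V.subtype) ((evalOn_injective hBi).comp V.injective_subtype)
  refine ⟨C, hC, fun f hf ↦ ?_⟩
  obtain ⟨x, hxB, hx⟩ := hB.exists_isMaxOn (hBi.mono interior_subset)
    (continuous_eval f).abs.continuousOn
  refine ⟨x, hxB, fun d ↦ ?_⟩
  by_cases hd : f.coeff d = 0
  · rw [hd, abs_zero]
    positivity
  have d_le : d.degree ≤ s := (le_totalDegree (mem_support_iff.mpr hd)).trans hf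
  let v : V := ⟨f, (mem_restrictTotalDegree σ s f).mpr hf⟩
  calc |f.coeff d| ≤ ‖coeffs v‖ := norm_le_pi_norm (coeffs v) ⟨d, d_le⟩
    _ ≤ C * ‖evalOn B f‖ := hcoeffs v
    _ ≤ C * |eval x f| := by
        gcongr
        exact (ContinuousMap.norm_le _ (abs_nonneg _)).mpr fun y ↦ hx y.2

variable [Fintype σ]

theorem volume_abs_mvPolynomial_eval_lt_le {s : ℕ} (hs : s ≠ 0) {x : σ → ℝ} {K : Set (σ → ℝ)}
    (hK : StarConvex ℝ x K) (hKm : MeasurableSet K) {f : MvPolynomial σ ℝ}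
    (hf : f.totalDegree ≤ s) {δ : ℝ} (hδ : 0 ≤ δ) :
    volume {y ∈ K | |eval y f| < δ ^ s * |eval x f|} ≤
      2 ^ (Fintype.card σ + 1) * ENNReal.ofReal (4 * s * δ) * volume K := by
  rw [← Module.finrank_fintype_fun_eq_card ℝ]
  refine measure_abs_lt_le_of_polynomial_on_lines volume hK hKm (continuous_eval f).measurable hs
    (fun v ↦ ?_) hδ
  obtain ⟨g, hg, g_eval⟩ := exists_natDegree_le_eval_add_smul f x v
  exact ⟨g, hg.trans hf, g_eval⟩

theorem exists_volume_abs_eval_le_le {s : ℕ} (hs : s ≠ 0) {K : Set (σ → ℝ)} (hK : Convex ℝ K)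
    (hKc : IsCompact K) (hKi : (interior K).Nonempty) :
    ∃ C : ℝ, 0 < C ∧ ∀ f : MvPolynomial σ ℝ, f.totalDegree ≤ s → ∀ d, f.coeff d ≠ 0 →
      ∀ α : ℝ, 0 < α →
        volume {x ∈ K | |eval x f| ≤ α} ≤
          ENNReal.ofReal (C * (α / |f.coeff d|) ^ (1 / (s : ℝ))) := by
  obtain ⟨B, hB, coeff_le⟩ := exists_abs_coeff_le_mul_abs_eval s hKc hKi
  have volume_K_pos : 0 < volume.real K :=
    ENNReal.toReal_pos (Measure.measure_pos_of_nonempty_interior _ hKi).ne' hKc.measure_ne_top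
  refine ⟨2 ^ (Fintype.card σ + 1) * (4 * s * (2 * B) ^ (1 / (s : ℝ))) * volume.real K,
    by positivity, fun f hf d hd α hα ↦ ?_⟩
  obtain ⟨x, hxK, hx⟩ := coeff_le f hf
  set δ : ℝ := (2 * B) ^ (1 / (s : ℝ)) * (α / |f.coeff d|) ^ (1 / (s : ℝ)) with hδ
  have α_lt : α < δ ^ s * |eval x f| := by
    have δ_pow : δ ^ s = 2 * B * (α / |f.coeff d|) := by
      rw [hδ, mul_pow, one_div, Real.rpow_inv_natCast_pow (by positivity) hs,
        Real.rpow_inv_natCast_pow (by positivity) hs]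
    calc α < 2 * α := by linarith
      _ = 2 * (α / |f.coeff d|) * |f.coeff d| := by
        rw [mul_assoc, div_mul_cancel₀ _ (abs_ne_zero.mpr hd)]
      _ ≤ 2 * (α / |f.coeff d|) * (B * |eval x f|) := by gcongr; exact hx d
      _ = δ ^ s * |eval x f| := by rw [δ_pow]; ring
  calc volume {y ∈ K | |eval y f| ≤ α}
      ≤ volume {y ∈ K | |eval y f| < δ ^ s * |eval x f|} :=
        measure_mono fun y hy ↦ ⟨hy.1, hy.2.trans_lt α_lt⟩
    _ ≤ 2 ^ (Fintype.card σ + 1) * ENNReal.ofReal (4 * s * δ) * volume K :=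
        volume_abs_mvPolynomial_eval_lt_le hs (hK.starConvex hxK) hKc.measurableSet hf
          (by positivity)
    _ = ENNReal.ofReal (2 ^ (Fintype.card σ + 1) * (4 * s * δ) * volume.real K) := by
        rw [ENNReal.ofReal_mul (q := volume.real K) (by positivity),
          ENNReal.ofReal_mul (q := 4 * s * δ) (by positivity),
          ofReal_measureReal hKc.measure_ne_top, ENNReal.ofReal_pow zero_le_two,
          ENNReal.ofReal_ofNat]
    _ = _ := by
        rw [hδ]
        ring_nf

end MvPolynomial

theorem exists_mem_support_polyHeight_eq {q : ℕ} {P : Fin q → MvPolynomial (Fin q) ℝ}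
    (hP : ∃ i, P i ≠ 0) : ∃ i, ∃ d ∈ (P i).support, (polyHeight P : ℝ) = |(P i).coeff d| := by
  obtain ⟨j, hj⟩ := hP
  obtain ⟨e, he⟩ := MvPolynomial.support_nonempty.mpr hj
  obtain ⟨⟨i, d⟩, hd, height_eq⟩ := Finset.exists_mem_eq_sup
    (Finset.univ.sigma fun i ↦ (P i).support) ⟨⟨j, e⟩, Finset.mem_sigma.mpr ⟨Finset.mem_univ j, he⟩⟩
    fun p ↦ ‖(P p.1).coeff p.2‖₊
  rw [Finset.sup_sigma] at height_eq
  exact ⟨i, d, (Finset.mem_sigma.mp hd).2, congrArg NNReal.toReal height_eq⟩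

theorem abs_le_sqrt_sum_sq {ι : Type*} [Fintype ι] (a : ι → ℝ) (i : ι) :
    |a i| ≤ Real.sqrt (∑ j, a j ^ 2) :=
  Real.abs_le_sqrt <|
    Finset.single_le_sum (f := fun j ↦ a j ^ 2) (fun _ _ ↦ sq_nonneg _) (Finset.mem_univ i)

/-- For all `q, s ≥ 1` there is `C = C(q,s) > 0` such that for every nonzero polynomial
map `p : ℝ^q → ℝ^q` of degree at most `s` and every `α > 0`,
`meas {x ∈ [-1/2,1/2]^q : ‖p(x)‖ ≤ α} ≤ C α^{1/s} / ht(p)^{1/s}`. -/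
theorem small_values_of_polynomials (q s : ℕ) (hq : 1 ≤ q) (hs : 1 ≤ s) :
    ∃ C : ℝ, 0 < C ∧ ∀ P : Fin q → MvPolynomial (Fin q) ℝ,
      (∀ i, (P i).totalDegree ≤ s) → (∃ i, P i ≠ 0) →
      ∀ α : ℝ, 0 < α →
        volume {x : Fin q → ℝ |
            (∀ i, |x i| ≤ 1 / 2) ∧
              Real.sqrt (∑ i, (MvPolynomial.eval x (P i)) ^ 2) ≤ α} ≤
          ENNReal.ofReal
            (C * α ^ ((1 : ℝ) / (s : ℝ)) / (polyHeight P : ℝ) ^ ((1 : ℝ) / (s : ℝ))) := by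
  let cube : Set (Fin q → ℝ) := Metric.closedBall 0 (1 / 2)
  have cube_interior : (interior cube).Nonempty :=
    ⟨0, Metric.ball_subset_interior_closedBall (Metric.mem_ball_self one_half_pos)⟩
  obtain ⟨C, hC, volume_le⟩ := exists_volume_abs_eval_le_le (Nat.one_le_iff_ne_zero.mp hs)
    (convex_closedBall 0 (1 / 2)) (isCompact_closedBall 0 (1 / 2)) cube_interior
  refine ⟨C, hC, fun P hP hne α hα ↦ ?_⟩
  obtain ⟨i, d, hd, height_eq⟩ := exists_mem_support_polyHeight_eq hne
  rw [mul_div_assoc, ← Real.div_rpow hα.le (polyHeight P).coe_nonneg, height_eq]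
  refine (measure_mono ?_).trans
    (volume_le (P i) (hP i) d (MvPolynomial.mem_support_iff.mp hd) α hα)
  rintro x ⟨hx, norm_le⟩
  exact ⟨mem_closedBall_zero_iff.mpr ((pi_norm_le_iff_of_nonneg one_half_pos.le).mpr hx),
    (abs_le_sqrt_sum_sq (fun j ↦ MvPolynomial.eval x (P j)) i).trans norm_le⟩
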